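/- Let X ⊆ ℝ² be a compact convex set with nonempty interior, perimeter ℓ(∂X) = 2π, and let l > 0. Then the Buffon probability satisfies P_X(l) ≤ (Area(X) + π·l² − 2l + l·(2π − ℓ(∂((X_l)^l)))) / Area(X). -/

import Mathlib

open MeasureTheory Metric Set Real Pointwise
open scoped ENNReal RealInnerProductSpace

noncomputable section

/-- The Euclidean plane. -/
abbrev Plane := EuclideanSpace ℝ (Fin 2)

/-- The unit vector in the plane making angle `θ` with the horizontal axis. -/
def needleDir (θ : ℝ) : Plane :=
  (EuclideanSpace.equiv (Fin 2) ℝ).symm ![Real.cos θ, Real.sin θ]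

/-- The set of directions `θ ∈ [0, 2π)` for which the needle of length `l`
originating at `x` has its other endpoint in `X`. -/
def needleAngles (X : Set Plane) (l : ℝ) (x : Plane) : Set ℝ :=
  {θ ∈ Set.Ico 0 (2 * π) | x + l • needleDir θ ∈ X}

/-- The pointwise probability `p_X(x, l)` that a random needle of length `l` at `x`
lies within `X`. -/
def pointwiseProb (X : Set Plane) (x : Plane) (l : ℝ) : ℝ :=
  (1 / (2 * π)) * (volume (needleAngles X l x)).toReal

/-- The Buffon probability `P_X(l)` that a random needle of length `l` originating at a
uniformly chosen point of `X` lies within `X`; taken to be `0` when `X` has zero area. -/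
def buffonProb (X : Set Plane) (l : ℝ) : ℝ :=
  if volume X = 0 then 0
  else (1 / (2 * π * (volume X).toReal)) *
    ∫ x in X, (volume (needleAngles X l x)).toReal

/-- The interior parallel `X_r`: the Minkowski difference of `X` with the closed ball
of radius `r`. -/
def innerParallel (X : Set Plane) (r : ℝ) : Set Plane :=
  {x : Plane | Metric.closedBall x r ⊆ X}

/-- The exterior parallel `X^r`: the Minkowski sum of `X` with the closed ball
of radius `r`. -/
def exterParallel (X : Set Plane) (r : ℝ) : Set Plane :=
  X + Metric.closedBall (0 : Plane) r

end

/-- The coordinate of `x` orthogonal to the direction `needleDir θ`. -/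
noncomputable def height (θ : ℝ) (x : Plane) : ℝ := x 1 * Real.cos θ - x 0 * Real.sin θ

/-- The coordinate of `x` along the direction `needleDir θ`. -/
noncomputable def along (θ : ℝ) (x : Plane) : ℝ := x 0 * Real.cos θ + x 1 * Real.sin θ

@[simp] lemma needleDir_zero (θ : ℝ) : needleDir θ 0 = Real.cos θ := rfl

@[simp] lemma needleDir_one (θ : ℝ) : needleDir θ 1 = Real.sin θ := rfl

@[fun_prop]
lemma continuous_needleDir : Continuous needleDir := by
  unfold needleDir
  refine (EuclideanSpace.equiv (Fin 2) ℝ).symm.continuous.comp ?_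
  refine continuous_pi fun i => ?_
  fin_cases i <;> simp <;> fun_prop

lemma norm_needleDir (θ : ℝ) : ‖needleDir θ‖ = 1 := by
  simp [EuclideanSpace.norm_eq, Fin.sum_univ_two]

lemma needleDir_ne_zero (θ : ℝ) : needleDir θ ≠ 0 := by
  rw [← norm_ne_zero_iff, norm_needleDir]; exact one_ne_zero

@[fun_prop]
lemma continuous_height (θ : ℝ) : Continuous (height θ) := by
  unfold height; fun_prop

lemma height_add (θ : ℝ) (x y : Plane) : height θ (x + y) = height θ x + height θ y := by
  simp [height]; ring

lemma height_sub (θ : ℝ) (x y : Plane) : height θ (x - y) = height θ x - height θ y := by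
  simp [height]; ring

lemma height_smul (θ c : ℝ) (x : Plane) : height θ (c • x) = c * height θ x := by
  simp [height]; ring

lemma abs_height_le (θ : ℝ) (x : Plane) : |height θ x| ≤ ‖x‖ := by
  apply abs_le_of_sq_le_sq _ (norm_nonneg x)
  rw [EuclideanSpace.norm_sq_eq, Fin.sum_univ_two]
  simp only [height, Real.norm_eq_abs, sq_abs]
  nlinarith [sq_nonneg (x 1 * Real.sin θ + x 0 * Real.cos θ), Real.cos_sq_add_sin_sq θ]

lemma eq_add_smul_of_height_eq {θ : ℝ} {x q : Plane} (h : height θ x = height θ q) :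
    x = q + (along θ x - along θ q) • needleDir θ := by
  have hs := Real.cos_sq_add_sin_sq θ
  simp only [height] at h
  ext i
  fin_cases i
  · simp [along]; linear_combination -(Real.sin θ) * h + (q 0 - x 0) * hs
  · simp [along]; linear_combination (Real.cos θ) * h + (q 1 - x 1) * hs

lemma exists_eq_norm_smul_needleDir (x : Plane) :
    ∃ φ ∈ Ico 0 (2 * π), x = ‖x‖ • needleDir φ := by
  set z : ℂ := ⟨x 0, x 1⟩ with hz
  have hn : ‖z‖ = ‖x‖ := by
    rw [EuclideanSpace.norm_eq, Complex.norm_eq_sqrt_sq_add_sq, Fin.sum_univ_two]; simp [hz]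
  have h0 : x 0 = ‖x‖ * Real.cos z.arg := by rw [← hn, Complex.norm_mul_cos_arg]
  have h1 : x 1 = ‖x‖ * Real.sin z.arg := by rw [← hn, Complex.norm_mul_sin_arg]
  have hpi := Real.pi_pos
  rcases le_or_gt 0 z.arg with h | h
  · refine ⟨z.arg, ⟨h, by linarith [Complex.arg_le_pi z]⟩, ?_⟩
    ext i; fin_cases i
    · simpa using h0
    · simpa using h1
  · refine ⟨z.arg + 2 * π, ⟨by linarith [Complex.neg_pi_lt_arg z], by linarith⟩, ?_⟩
    ext i; fin_cases i
    · simpa using h0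
    · simpa using h1

lemma injOn_needleDir : InjOn needleDir (Ico 0 (2 * π)) := by
  intro a ha b hb h
  have hc : Real.cos a = Real.cos b := congrArg (fun v : Plane => v 0) h
  have hs : Real.sin a = Real.sin b := congrArg (fun v : Plane => v 1) h
  have := Real.Angle.cos_sin_inj hc hs
  obtain ⟨k, hk⟩ := Real.Angle.angle_eq_iff_two_pi_dvd_sub.1 this
  have hpi := Real.pi_pos
  have h1 : (k : ℝ) < 1 := by nlinarith [ha.2, hb.1]
  have h2 : (-1 : ℝ) < k := by nlinarith [hb.2, ha.1]
  have : k = 0 := by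
    have h1' : k < 1 := by exact_mod_cast h1
    have h2' : -1 < k := by exact_mod_cast h2
    omega
  subst this; simp at hk; linarith

/-- The boundary of a compact convex set with `0` in its interior is a simple closed curve. -/
lemma exists_frontier_param_of_zero_mem {Y : Set Plane} (hc : IsCompact Y) (hv : Convex ℝ Y)
    (h0 : (0 : Plane) ∈ interior Y) :
    ∃ γ : ℝ → Plane, Continuous γ ∧ InjOn γ (Ico 0 (2 * π)) ∧
      γ '' Ico 0 (2 * π) = frontier Y := by
  have hn : Y ∈ nhds (0 : Plane) := mem_interior_iff_mem_nhds.1 h0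
  have hpos : ∀ x : Plane, x ≠ 0 → 0 < gauge Y x := fun x hx =>
    (gauge_pos (absorbent_nhds_zero hn)
      ((NormedSpace.isVonNBounded_iff ℝ).2 hc.isBounded)).2 hx
  have hg : ∀ θ, 0 < gauge Y (needleDir θ) := fun θ => hpos _ (needleDir_ne_zero θ)
  have hcg := continuous_gauge hv hn
  refine ⟨fun θ => (gauge Y (needleDir θ))⁻¹ • needleDir θ, ?_, ?_, ?_⟩
  · exact ((hcg.comp continuous_needleDir).inv₀ fun θ => (hg θ).ne').smul continuous_needleDir
  · intro a ha b hb h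
    have h' := congrArg norm h
    simp only [norm_smul, norm_needleDir, mul_one, norm_inv, Real.norm_eq_abs,
      abs_of_pos (hg _)] at h'
    simp only [h'] at h
    exact injOn_needleDir ha hb (smul_right_injective _ (inv_pos.2 (hg b)).ne' h)
  · ext x
    rw [← gauge_eq_one_iff_mem_frontier hv hn]
    constructor
    · rintro ⟨θ, -, rfl⟩
      simp only
      rw [gauge_smul_of_nonneg (inv_pos.2 (hg θ)).le, smul_eq_mul, inv_mul_cancel₀ (hg θ).ne']
    · intro hx
      obtain ⟨φ, hφ, he⟩ := exists_eq_norm_smul_needleDir x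
      refine ⟨φ, hφ, ?_⟩
      simp only
      have h1 : ‖x‖ * gauge Y (needleDir φ) = 1 := by
        rw [← smul_eq_mul, ← gauge_smul_of_nonneg (norm_nonneg x), ← he, hx]
      rw [inv_eq_of_mul_eq_one_left h1, ← he]

/-- The boundary of a planar convex body is a simple closed curve. -/
lemma exists_frontier_param {Y : Set Plane} (hc : IsCompact Y) (hv : Convex ℝ Y)
    (hi : (interior Y).Nonempty) :
    ∃ γ : ℝ → Plane, Continuous γ ∧ InjOn γ (Ico 0 (2 * π)) ∧
      γ '' Ico 0 (2 * π) = frontier Y := by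
  obtain ⟨c, hcY⟩ := hi
  let e : Plane ≃ₜ Plane := Homeomorph.addLeft (-c)
  obtain ⟨γ, h1, h2, h3⟩ := exists_frontier_param_of_zero_mem (Y := e '' Y)
    (hc.image e.continuous) (by simpa [e] using hv.translate (-c))
    (by rw [← e.image_interior]; exact ⟨c, hcY, by simp [e]⟩)
  refine ⟨fun t => e.symm (γ t), e.symm.continuous.comp h1,
    fun a ha b hb h => h2 ha hb (e.symm.injective h), ?_⟩
  rw [← e.image_frontier] at h3
  rw [← image_image, h3, image_image]
  simp

/-- A form of the Cauchy formula for segments. -/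
lemma four_mul_norm_eq_integral (x : Plane) :
    4 * ‖x‖ = ∫ θ in (0)..(2 * π), |height θ x| := by
  obtain ⟨φ, -, hφ⟩ := exists_eq_norm_smul_needleDir x
  have h1 : ∀ θ, |height θ x| = ‖x‖ * |Real.sin (θ - φ)| := by
    intro θ
    have hh : height θ x = ‖x‖ * Real.sin (φ - θ) := by
      conv_lhs => rw [hφ]
      rw [height_smul, Real.sin_sub]; simp [height]
    rw [hh, abs_mul, abs_norm, ← neg_sub θ φ, Real.sin_neg, abs_neg]
  simp_rw [h1]
  rw [intervalIntegral.integral_const_mul,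
    intervalIntegral.integral_comp_sub_right (fun t => |Real.sin t|) φ]
  have hper : Function.Periodic (fun t => |Real.sin t|) (2 * π) := fun t => by simp
  have e1 : 2 * π - φ = (0 - φ) + 2 * π := by ring
  rw [e1, hper.intervalIntegral_add_eq (0 - φ) 0, zero_add]
  have hci : ∀ a b : ℝ, IntervalIntegrable (fun t => |Real.sin t|) volume a b := fun a b =>
    (Real.continuous_sin.abs).intervalIntegrable a b
  have hpi := Real.pi_pos
  have i1 : ∫ t in (0)..π, |Real.sin t| = 2 := by
    have : ∫ t in (0)..π, |Real.sin t| = ∫ t in (0)..π, Real.sin t :=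
      intervalIntegral.integral_congr fun t ht => by
        rw [uIcc_of_le hpi.le] at ht
        exact abs_of_nonneg (Real.sin_nonneg_of_mem_Icc ht)
    rw [this, integral_sin]; norm_num
  have i2 : ∫ t in π..(2 * π), |Real.sin t| = 2 := by
    have hp : Function.Periodic (fun t => |Real.sin t|) π := fun t => by
      simp [Real.sin_add_pi]
    rw [two_mul, hp.intervalIntegral_add_eq π 0, zero_add, i1]
  rw [← intervalIntegral.integral_add_adjacent_intervals (hci 0 π) (hci π _), i1, i2]
  ring

lemma ofReal_norm_eq_lintegral (x : Plane) :
    4 * ENNReal.ofReal ‖x‖ = ∫⁻ θ in Ico 0 (2 * π), ENNReal.ofReal |height θ x| := by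
  have h4 : (4 : ℝ≥0∞) = ENNReal.ofReal 4 := by norm_num
  have hcont : Continuous fun θ => |height θ x| := by unfold height; fun_prop
  rw [h4, ← ENNReal.ofReal_mul (by norm_num), four_mul_norm_eq_integral,
    intervalIntegral.integral_of_le (by positivity), ← restrict_Ico_eq_restrict_Ioc,
    ofReal_integral_eq_lintegral_ofReal]
  · exact (hcont.integrableOn_Icc).mono_set Ico_subset_Icc_self
  · exact Filter.Eventually.of_forall fun θ => abs_nonneg _

lemma ofReal_abs_sub_le_volume {s : Set ℝ} (hs : s.OrdConnected) {a b : ℝ} (ha : a ∈ s)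
    (hb : b ∈ s) : ENNReal.ofReal |a - b| ≤ volume s := by
  rw [abs_sub_comm, ← Real.volume_interval]
  exact measure_mono (hs.uIcc_subset ha hb)

lemma four_mul_ediam_le {A : Set Plane} (hA : IsPreconnected A) :
    4 * ediam A ≤ ∫⁻ θ in Ico 0 (2 * π), volume (height θ '' A) := by
  rw [mul_comm, ← ENNReal.le_div_iff_mul_le (by simp) (by simp)]
  refine ediam_le fun p hp q hq => ?_
  rw [ENNReal.le_div_iff_mul_le (by simp) (by simp), mul_comm, edist_dist, dist_eq_norm,
    ofReal_norm_eq_lintegral]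
  refine lintegral_mono fun θ => ?_
  rw [height_sub]
  exact ofReal_abs_sub_le_volume (hA.image _ (continuous_height θ).continuousOn).ordConnected
    (mem_image_of_mem _ hp) (mem_image_of_mem _ hq)

lemma sum_lintegral_le_lintegral_sum {α ι : Type*} [MeasurableSpace α] (μ : Measure α)
    (s : Finset ι) (f : ι → α → ℝ≥0∞) :
    ∑ i ∈ s, ∫⁻ a, f i a ∂μ ≤ ∫⁻ a, ∑ i ∈ s, f i a ∂μ := by
  classical
  induction s using Finset.induction_on with
  | empty => simp
  | insert i s hi ih =>
    simp only [Finset.sum_insert hi]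
    exact (add_le_add le_rfl ih).trans (le_lintegral_add _ _)

/-- A ray from an interior point meets the boundary of a convex set at most once. -/
lemma eq_of_mem_frontier_of_mem_ray {E : Type*} [NormedAddCommGroup E] [NormedSpace ℝ E]
    {Y : Set E} (hv : Convex ℝ Y) {q d : E} (hq : q ∈ interior Y) {a b : ℝ}
    (ha : q + a • d ∈ frontier Y) (hb : q + b • d ∈ frontier Y) (hab : 0 < a * b) : a = b := by
  have key : ∀ a b : ℝ, q + a • d ∈ frontier Y → q + b • d ∈ frontier Y → 0 < a * b →
      ¬ |a| < |b| := by
    intro a b ha hb hab hlt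
    have hb0 : b ≠ 0 := by rintro rfl; simp at hab
    have hr : 0 < a / b := by
      rw [← mul_div_mul_right a b hb0]; exact div_pos hab (mul_self_pos.2 hb0)
    have hr1 : a / b < 1 := by
      rw [← abs_of_pos hr, abs_div, div_lt_one (abs_pos.2 hb0)]; exact hlt
    have := hv.combo_interior_closure_mem_interior hq (frontier_subset_closure hb)
      (sub_pos.2 hr1) hr.le (by ring)
    have e : (1 - a / b) • q + (a / b) • (q + b • d) = q + a • d := by
      rw [smul_add, smul_smul, div_mul_cancel₀ _ hb0]; module
    rw [e] at this
    exact ha.2 this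
  have h : |a| = |b| := le_antisymm (not_lt.1 (key b a hb ha (by linarith)))
    (not_lt.1 (key a b ha hb hab))
  rcases abs_eq_abs.1 h with h | h
  · exact h
  · subst h; nlinarith [sq_nonneg b]

/-- A line through an interior point of a convex set meets the boundary at most twice. -/
lemma eq_or_eq_of_mem_frontier_of_height_eq {Y : Set Plane} (hv : Convex ℝ Y) {θ : ℝ}
    {q x y z : Plane} (hq : q ∈ interior Y) (hx : x ∈ frontier Y) (hy : y ∈ frontier Y)
    (hz : z ∈ frontier Y) (hxq : height θ x = height θ q) (hyq : height θ y = height θ q)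
    (hzq : height θ z = height θ q) : x = y ∨ x = z ∨ y = z := by
  have ne : ∀ w ∈ frontier Y, height θ w = height θ q → along θ w - along θ q ≠ 0 := by
    intro w hw h h0
    have := eq_add_smul_of_height_eq h
    rw [h0, zero_smul, add_zero] at this
    exact hw.2 (this ▸ hq)
  have key : ∀ v ∈ frontier Y, ∀ w ∈ frontier Y, height θ v = height θ q →
      height θ w = height θ q → 0 < (along θ v - along θ q) * (along θ w - along θ q) →
      v = w := by
    intro v hv' w hw hvq hwq hpos
    have ev := eq_add_smul_of_height_eq hvq
    have ew := eq_add_smul_of_height_eq hwq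
    have := eq_of_mem_frontier_of_mem_ray hv hq (ev ▸ hv') (ew ▸ hw) hpos
    rw [ev, ew, this]
  rcases (ne x hx hxq).lt_or_gt with h1 | h1 <;> rcases (ne y hy hyq).lt_or_gt with h2 | h2 <;>
    rcases (ne z hz hzq).lt_or_gt with h3 | h3
  all_goals first
    | exact Or.inl (key x hx y hy hxq hyq (by first
        | exact mul_pos h1 h2 | exact mul_pos_of_neg_of_neg h1 h2))
    | exact Or.inr (Or.inl (key x hx z hz hxq hzq (by first
        | exact mul_pos h1 h3 | exact mul_pos_of_neg_of_neg h1 h3)))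
    | exact Or.inr (Or.inr (key y hy z hz hyq hzq (by first
        | exact mul_pos h2 h3 | exact mul_pos_of_neg_of_neg h2 h3)))

lemma exists_mem_interior_height_eq {Y : Set Plane} (hv : Convex ℝ Y)
    (hi : (interior Y).Nonempty) {θ t : ℝ} (ht : t ∈ interior (height θ '' Y)) :
    ∃ q ∈ interior Y, height θ q = t := by
  have hcl : Y ⊆ closure (interior Y) := by
    rw [hv.closure_interior_eq_closure_of_nonempty_interior hi]; exact subset_closure
  obtain ⟨ε, hε, hb⟩ := Metric.isOpen_iff.1 isOpen_interior t ht
  have hmem : ∀ s, |s - t| < ε → ∃ y ∈ Y, height θ y = s := fun s hs =>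
    interior_subset (s := height θ '' Y) (hb (by rwa [Metric.mem_ball, Real.dist_eq]))
  obtain ⟨y₁, hy₁, h₁⟩ := hmem (t - ε / 2) (by
    rw [abs_lt]; constructor <;> linarith)
  obtain ⟨y₂, hy₂, h₂⟩ := hmem (t + ε / 2) (by
    rw [abs_lt]; constructor <;> linarith)
  obtain ⟨z₁, hz₁, hz₁'⟩ := mem_closure_iff.1 (hcl hy₁) {z | height θ z < t}
    (isOpen_lt (continuous_height θ) continuous_const) (by simp [h₁, hε])
  obtain ⟨z₂, hz₂, hz₂'⟩ := mem_closure_iff.1 (hcl hy₂) {z | t < height θ z}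
    (isOpen_lt continuous_const (continuous_height θ)) (by simp [h₂, hε])
  have hoc : (height θ '' interior Y).OrdConnected :=
    (hv.interior.isPreconnected.image _ (continuous_height θ).continuousOn).ordConnected
  exact hoc.out (mem_image_of_mem _ hz₁') (mem_image_of_mem _ hz₂') ⟨le_of_lt hz₁, le_of_lt hz₂⟩

/-- Disjoint connected pieces of the boundary of a planar convex body have shadows which cover
the shadow of the body at most twice. -/
lemma sum_volume_height_image_le {Y : Set Plane} (hv : Convex ℝ Y)
    (hi : (interior Y).Nonempty) {N : ℕ} (A : Fin N → Set Plane)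
    (hA : ∀ i, IsPreconnected (A i)) (hsub : ∀ i, A i ⊆ frontier Y) (hcl : IsClosed Y)
    (hdisj : Pairwise fun i j => Disjoint (A i) (A j)) (θ : ℝ) :
    ∑ i, volume (height θ '' A i) ≤ 2 * volume (height θ '' Y) := by
  classical
  have hoc : ∀ i, (height θ '' A i).OrdConnected := fun i =>
    ((hA i).image _ (continuous_height θ).continuousOn).ordConnected
  have hocY : (height θ '' Y).OrdConnected :=
    (hv.isPreconnected.image _ (continuous_height θ).continuousOn).ordConnected
  have hm := fun i => (hoc i).measurableSet
  have e1 : ∀ i, volume (height θ '' A i)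
      = ∫⁻ t, (height θ '' A i).indicator (fun _ => (1 : ℝ≥0∞)) t := fun i => by
    rw [lintegral_indicator_const (hm i), one_mul]
  have e2 : 2 * volume (height θ '' Y)
      = ∫⁻ t, (height θ '' Y).indicator (fun _ => (2 : ℝ≥0∞)) t := by
    rw [lintegral_indicator_const hocY.measurableSet]
  rw [e2, Finset.sum_congr rfl fun i _ => e1 i]
  refine (sum_lintegral_le_lintegral_sum _ _ _).trans (lintegral_mono_ae ?_)
  have hnull : volume (frontier (height θ '' Y)) = 0 := hocY.convex.addHaar_frontier volume
  filter_upwards [measure_eq_zero_iff_ae_notMem.1 hnull] with t ht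
  have hYA : ∀ i, A i ⊆ Y := fun i => (hsub i).trans hcl.frontier_subset
  by_cases htY : t ∈ height θ '' Y
  · rw [indicator_of_mem htY]
    have hti : t ∈ interior (height θ '' Y) := by
      by_contra hc
      exact ht ⟨subset_closure htY, hc⟩
    obtain ⟨q, hq, rfl⟩ := exists_mem_interior_height_eq hv hi hti
    have : ∑ i, (height θ '' A i).indicator (fun _ => (1 : ℝ≥0∞)) (height θ q)
        = (Finset.univ.filter fun i => height θ q ∈ height θ '' A i).card := by
      simp [indicator_apply]
    rw [this]
    suffices h : (Finset.univ.filter fun i => height θ q ∈ height θ '' A i).card ≤ 2 by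
      exact_mod_cast h
    by_contra! hcard
    obtain ⟨i, j, k, hi', hj', hk', hij, hik, hjk⟩ := Finset.two_lt_card_iff.1 hcard
    simp only [Finset.mem_filter, Finset.mem_univ, true_and] at hi' hj' hk'
    obtain ⟨x, hx, hxq⟩ := hi'
    obtain ⟨y, hy, hyq⟩ := hj'
    obtain ⟨z, hz, hzq⟩ := hk'
    rcases eq_or_eq_of_mem_frontier_of_height_eq hv hq (hsub _ hx) (hsub _ hy) (hsub _ hz)
      hxq hyq hzq with h | h | h <;> subst h
    · exact disjoint_left.1 (hdisj hij) hx hy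
    · exact disjoint_left.1 (hdisj hik) hx hz
    · exact disjoint_left.1 (hdisj hjk) hy hz
  · rw [indicator_of_notMem htY, nonpos_iff_eq_zero]
    refine Finset.sum_eq_zero fun i _ => indicator_of_notMem (fun h => htY ?_) _
    exact image_mono (hYA i) h

lemma hausdorffMeasure_one_le_of_covers {Γ : Set Plane} {C : ℝ≥0∞}
    (h : ∀ ε : ℝ≥0∞, 0 < ε → ∃ (N : ℕ) (A : Fin N → Set Plane), (∀ i, ediam (A i) ≤ ε) ∧
      Γ ⊆ ⋃ i, A i ∧ ∑ i, ediam (A i) ≤ C) : μH[1] Γ ≤ C := by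
  have hε : ∀ n : ℕ, (0 : ℝ≥0∞) < (n : ℝ≥0∞)⁻¹ := fun n =>
    ENNReal.inv_pos.2 (ENNReal.natCast_ne_top n)
  choose N A h1 h2 h3 using fun n : ℕ => h _ (hε n)
  refine (Measure.hausdorffMeasure_le_liminf_sum 1 Γ (l := Filter.atTop)
    (fun n : ℕ => (n : ℝ≥0∞)⁻¹) ENNReal.tendsto_inv_nat_nhds_zero A
    (Filter.Eventually.of_forall h1) (Filter.Eventually.of_forall h2)).trans ?_
  simp only [ENNReal.rpow_one]
  exact Filter.liminf_le_of_frequently_le' (Filter.Frequently.of_forall h3)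

/-- A simple closed curve splits into finitely many disjoint connected pieces of small
diameter. -/
lemma exists_small_arcs {γ : ℝ → Plane} (hγ : Continuous γ) (hinj : InjOn γ (Ico 0 (2 * π)))
    {ε : ℝ≥0∞} (hε : 0 < ε) :
    ∃ (N : ℕ) (A : Fin N → Set Plane), (∀ i, ediam (A i) ≤ ε) ∧ (∀ i, IsPreconnected (A i)) ∧
      (Pairwise fun i j => Disjoint (A i) (A j)) ∧ ⋃ i, A i = γ '' Ico 0 (2 * π) := by
  have hu := isCompact_Icc.uniformContinuousOn_of_continuous
    (hγ.continuousOn (s := Icc 0 (2 * π)))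
  rw [EMetric.uniformContinuousOn_iff] at hu
  obtain ⟨δ, hδ, hu⟩ := hu ε hε
  have hpi := Real.pi_pos
  obtain ⟨δ', hδ', hδδ⟩ : ∃ δ' : ℝ, 0 < δ' ∧ ENNReal.ofReal δ' ≤ δ := by
    rcases eq_or_ne δ ⊤ with rfl | h
    · exact ⟨1, one_pos, le_top⟩
    · exact ⟨δ.toReal, ENNReal.toReal_pos hδ.ne' h, (ENNReal.ofReal_toReal h).le⟩
  obtain ⟨n, hn⟩ := exists_nat_gt (2 * π / δ')
  have hn0 : (0 : ℝ) < n := lt_trans (by positivity) hn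
  set w : ℝ := 2 * π / n with hw
  have hw0 : 0 < w := by positivity
  have hwδ : w < δ' := by
    rw [hw, div_lt_iff₀ hn0]; rw [div_lt_iff₀ hδ'] at hn; linarith
  have hwn : w * n = 2 * π := div_mul_cancel₀ _ hn0.ne'
  have hsub : ∀ i : Fin n, Ico (w * i) (w * (i + 1)) ⊆ Ico 0 (2 * π) := by
    intro i t ht
    have hi : ((i : ℕ) : ℝ) + 1 ≤ n := by exact_mod_cast i.2
    have := mul_le_mul_of_nonneg_left hi hw0.le
    exact ⟨le_trans (by positivity) ht.1, by linarith [ht.2]⟩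
  have hfl : ∀ i : Fin n, ∀ t ∈ Ico (w * i) (w * (i + 1)), ⌊t / w⌋₊ = (i : ℕ) := by
    intro i t ht
    have h0 : 0 ≤ t := (hsub i ht).1
    rw [Nat.floor_eq_iff (by positivity), le_div_iff₀ hw0, div_lt_iff₀ hw0]
    exact ⟨by linarith [ht.1], by linarith [ht.2]⟩
  refine ⟨n, fun i => γ '' Ico (w * i) (w * (i + 1)), fun i => ?_, fun i => ?_, ?_, ?_⟩
  · refine ediam_le ?_
    rintro _ ⟨s, hs, rfl⟩ _ ⟨t, ht, rfl⟩
    refine (hu (Ico_subset_Icc_self (hsub i hs)) (Ico_subset_Icc_self (hsub i ht))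
      (lt_of_lt_of_le ?_ hδδ)).le
    rw [edist_dist, ENNReal.ofReal_lt_ofReal_iff hδ', Real.dist_eq, abs_lt]
    constructor <;> linarith [hs.1, hs.2, ht.1, ht.2]
  · exact isPreconnected_Ico.image _ hγ.continuousOn
  · intro i j hij
    rw [disjoint_left]
    rintro _ ⟨s, hs, rfl⟩ ⟨t, ht, hst⟩
    have := hinj (hsub j ht) (hsub i hs) hst
    subst this
    exact hij (Fin.ext ((hfl i t hs).symm.trans (hfl j t ht)))
  · rw [← image_iUnion]
    congr 1
    refine Subset.antisymm (iUnion_subset hsub) fun t ht => ?_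
    have h0 : 0 ≤ t / w := div_nonneg ht.1 hw0.le
    have h1 : ⌊t / w⌋₊ < n := by
      rw [Nat.floor_lt h0, div_lt_iff₀ hw0]; linarith [ht.2]
    refine mem_iUnion.2 ⟨⟨_, h1⟩, ?_, ?_⟩
    · have := (le_div_iff₀ hw0).1 (Nat.floor_le h0)
      simp only; linarith
    · have := (div_lt_iff₀ hw0).1 (Nat.lt_floor_add_one (t / w))
      simp only; linarith

/-- One half of the Cauchy formula: the perimeter of a planar convex body is at most half of the
integral of its width over all directions. -/
lemma two_mul_hausdorffMeasure_frontier_le {Y : Set Plane} (hc : IsCompact Y)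
    (hv : Convex ℝ Y) (hi : (interior Y).Nonempty) :
    2 * μH[1] (frontier Y) ≤ ∫⁻ θ in Ico 0 (2 * π), volume (height θ '' Y) := by
  obtain ⟨γ, hγ, hinj, him⟩ := exists_frontier_param hc hv hi
  rw [mul_comm, ← ENNReal.le_div_iff_mul_le (by simp) (by simp)]
  refine hausdorffMeasure_one_le_of_covers fun ε hε => ?_
  obtain ⟨N, A, h1, h2, h3, h4⟩ := exists_small_arcs hγ hinj hε
  rw [him] at h4
  refine ⟨N, A, h1, h4.ge, ?_⟩
  rw [ENNReal.le_div_iff_mul_le (by simp) (by simp), mul_comm]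
  have key : 2 * (2 * ∑ i, ediam (A i))
      ≤ 2 * ∫⁻ θ in Ico 0 (2 * π), volume (height θ '' Y) := by
    calc 2 * (2 * ∑ i, ediam (A i)) = ∑ i, 4 * ediam (A i) := by
          rw [← mul_assoc, Finset.mul_sum]; norm_num
      _ ≤ ∑ i, ∫⁻ θ in Ico 0 (2 * π), volume (height θ '' A i) :=
          Finset.sum_le_sum fun i _ => four_mul_ediam_le (h2 i)
      _ ≤ ∫⁻ θ in Ico 0 (2 * π), ∑ i, volume (height θ '' A i) :=
          sum_lintegral_le_lintegral_sum _ _ _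
      _ ≤ ∫⁻ θ in Ico 0 (2 * π), 2 * volume (height θ '' Y) :=
          lintegral_mono fun θ => sum_volume_height_image_le hv hi A h2
            (fun i => h4 ▸ subset_iUnion A i) hc.isClosed h3 θ
      _ = _ := lintegral_const_mul' _ _ (by simp)
  exact (ENNReal.mul_le_mul_iff_right (by simp) (by simp)).1 key

/-- From a boundary point of a convex body, the outer normal ray reaches the boundary of any
compact set containing the body. -/
lemma exists_mem_frontier_forall_inner_nonpos {E : Type*} [NormedAddCommGroup E]
    [InnerProductSpace ℝ E] [CompleteSpace E] {X Y : Set E} (hX : IsCompact X)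
    (hYX : Y ⊆ X) (hv : Convex ℝ Y) (hcl : IsClosed Y) (hi : (interior Y).Nonempty) {y : E}
    (hy : y ∈ frontier Y) : ∃ x ∈ frontier X, ∀ w ∈ Y, ⟪x - y, w - y⟫ ≤ 0 := by
  obtain ⟨f, hf⟩ := geometric_hahn_banach_open_point hv.interior isOpen_interior hy.2
  set n : E := (InnerProductSpace.toDual ℝ E).symm f with hn
  have hfn : ∀ v, ⟪n, v⟫ = f v := fun v => by
    simp [hn]
  have hle : ∀ w ∈ Y, ⟪n, w - y⟫ ≤ 0 := by
    intro w hw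
    have hw' : w ∈ closure (interior Y) := by
      rw [hv.closure_interior_eq_closure_of_nonempty_interior hi]; exact subset_closure hw
    have : closure (interior Y) ⊆ {a | f a ≤ f y} :=
      closure_minimal (fun a ha => (hf a ha).le) (isClosed_le f.continuous continuous_const)
    have := this hw'
    simp only [mem_ofPred_eq] at this
    rw [hfn, map_sub]; linarith
  have hn0 : n ≠ 0 := by
    rintro h0
    obtain ⟨a, ha⟩ := hi
    have := hf a ha
    rw [← hfn, ← hfn, h0] at this
    simp at this
  have hyX : y ∈ X := hYX (hcl.frontier_subset hy)
  let S : Set ℝ := {s | 0 ≤ s ∧ y + s • n ∈ X}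
  have hScl : IsClosed S :=
    (isClosed_le continuous_const continuous_id).inter
      (hX.isClosed.preimage (by fun_prop : Continuous fun s : ℝ => y + s • n))
  obtain ⟨R, hR⟩ := hX.isBounded.subset_closedBall y
  have hSb : S ⊆ Icc 0 (R / ‖n‖) := by
    intro s hs
    refine ⟨hs.1, ?_⟩
    have := hR hs.2
    rw [mem_closedBall, dist_eq_norm, add_sub_cancel_left, norm_smul, Real.norm_eq_abs,
      abs_of_nonneg hs.1] at this
    rwa [le_div_iff₀ (norm_pos_iff.2 hn0)]
  have hSc : IsCompact S := isCompact_Icc.of_isClosed_subset hScl hSb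
  obtain ⟨s, hs, hmax⟩ := hSc.exists_isGreatest ⟨0, le_rfl, by simpa using hyX⟩
  refine ⟨y + s • n, ⟨subset_closure hs.2, fun hint => ?_⟩, fun w hw => ?_⟩
  · have hcont : Continuous fun t : ℝ => y + t • n := by fun_prop
    have hmem : ∀ᶠ t in nhds s, y + t • n ∈ X :=
      hcont.continuousAt.eventually (mem_interior_iff_mem_nhds.1 hint)
    obtain ⟨ε, hε, hb⟩ := Metric.eventually_nhds_iff.1 hmem
    have h1 : y + (s + ε / 2) • n ∈ X := hb (by
      rw [Real.dist_eq, add_sub_cancel_left, abs_of_pos (by linarith)]; linarith)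
    have := hmax ⟨by linarith [hs.1], h1⟩
    linarith
  · rw [add_sub_cancel_left, inner_smul_left]
    exact mul_nonpos_of_nonneg_of_nonpos hs.1 (hle w hw)

/-- Perimeter is monotone on convex bodies. -/
lemma hausdorffMeasure_frontier_mono {X Y : Set Plane} (hX : IsCompact X) (hYX : Y ⊆ X)
    (hv : Convex ℝ Y) (hcl : IsClosed Y) (hi : (interior Y).Nonempty) :
    μH[1] (frontier Y) ≤ μH[1] (frontier X) := by
  choose! g hg hin using fun (y : Plane) (hy : y ∈ frontier Y) =>
    exists_mem_frontier_forall_inner_nonpos hX hYX hv hcl hi hy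
  have hanti : AntilipschitzWith 1 fun y : frontier Y => g y := by
    refine AntilipschitzWith.of_le_mul_dist fun a b => ?_
    rw [NNReal.coe_one, one_mul, Subtype.dist_eq, dist_eq_norm, dist_eq_norm]
    have h1 := hin a a.2 b (hcl.frontier_subset b.2)
    have h2 := hin b b.2 a (hcl.frontier_subset a.2)
    have h3 : ‖(a : Plane) - b‖ ^ 2 ≤ ⟪g a - g b, (a : Plane) - b⟫ := by
      rw [← real_inner_self_eq_norm_sq]
      simp only [inner_sub_left, inner_sub_right] at h1 h2 ⊢
      linarith
    have h4 := real_inner_le_norm (g a - g b) ((a : Plane) - b)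
    rcases (norm_nonneg ((a : Plane) - b)).eq_or_lt with h | h
    · rw [← h]; exact norm_nonneg _
    · nlinarith
  have h1 := hanti.le_hausdorffMeasure_image zero_le_one univ
  have h2 := (isometry_subtype_coe (s := frontier Y)).hausdorffMeasure_image
    (Or.inl zero_le_one) univ
  rw [image_univ, Subtype.range_coe] at h2
  rw [h2]
  refine h1.trans ?_
  rw [ENNReal.coe_one, ENNReal.one_rpow, one_mul]
  refine measure_mono ?_
  rintro _ ⟨y, -, rfl⟩
  exact hg y y.2

lemma interior_exterParallel_nonempty {K : Set Plane} (hne : K.Nonempty) {l : ℝ} (hl : 0 < l) :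
    (interior (exterParallel K l)).Nonempty := by
  obtain ⟨x, hx⟩ := hne
  refine ⟨x, mem_interior_iff_mem_nhds.2 ?_⟩
  refine Filter.mem_of_superset (closedBall_mem_nhds x hl) fun y hy => ?_
  exact ⟨x, hx, y - x, by simpa [dist_eq_norm] using hy, by simp⟩

lemma measurableSet_needle {X : Set Plane} (hX : IsClosed X) (l : ℝ) :
    MeasurableSet {p : Plane × ℝ | p.1 + l • needleDir p.2 ∈ X} :=
  (hX.preimage (by fun_prop : Continuous fun p : Plane × ℝ =>
    p.1 + l • needleDir p.2)).measurableSet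

/-- The point with prescribed coordinates across and along the direction `needleDir θ`. -/
noncomputable def rotatedPoint (θ : ℝ) (p : ℝ × ℝ) : Plane :=
  !₂[p.2 * Real.cos θ - p.1 * Real.sin θ, p.2 * Real.sin θ + p.1 * Real.cos θ]

@[fun_prop]
lemma continuous_rotatedPoint (θ : ℝ) : Continuous (rotatedPoint θ) := by
  unfold rotatedPoint
  refine (PiLp.continuous_toLp 2 _).comp (continuous_pi fun i => ?_)
  fin_cases i <;> simp <;> fun_prop

lemma rotatedPoint_height_along (θ : ℝ) (x : Plane) :
    rotatedPoint θ (height θ x, along θ x) = x := by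
  have hs := Real.cos_sq_add_sin_sq θ
  ext i
  fin_cases i
  · simp [height, along, rotatedPoint]; linear_combination x 0 * hs
  · simp [height, along, rotatedPoint]; linear_combination x 1 * hs

lemma rotatedPoint_add (θ s r c : ℝ) :
    rotatedPoint θ (s, r + c) = rotatedPoint θ (s, r) + c • needleDir θ := by
  ext i
  fin_cases i <;> simp [rotatedPoint] <;> ring

lemma measurePreserving_height_along (θ : ℝ) :
    MeasurePreserving (fun x : Plane => (height θ x, along θ x)) := by
  let f : Plane →ₗ[ℝ] Plane :=
    { toFun := fun x => !₂[height θ x, along θ x]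
      map_add' := fun x y => by
        ext i
        fin_cases i <;> simp [height, along] <;> ring
      map_smul' := fun c x => by
        ext i
        fin_cases i <;> simp [height, along] <;> ring }
  let g : Plane →ₗᵢ[ℝ] Plane :=
    { f with
      norm_map' := fun x => by
        have hsq : ‖f x‖ ^ 2 = ‖x‖ ^ 2 := by
          rw [EuclideanSpace.norm_sq_eq, EuclideanSpace.norm_sq_eq, Fin.sum_univ_two,
            Fin.sum_univ_two]
          simp only [Real.norm_eq_abs, sq_abs]
          simp [f, height, along]
          linear_combination (x 0 ^ 2 + x 1 ^ 2) * Real.cos_sq_add_sin_sq θ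
        exact (sq_eq_sq₀ (norm_nonneg _) (norm_nonneg _)).1 hsq }
  have h1 := (g.toLinearIsometryEquiv rfl).measurePreserving
  have h2 := (volume_preserving_finTwoArrow ℝ).comp
    ((PiLp.volume_preserving_ofLp (Fin 2)).comp h1)
  exact h2

lemma volume_eq_lintegral_rotatedPoint (θ : ℝ) {S : Set Plane} (hS : MeasurableSet S) :
    volume S = ∫⁻ s : ℝ, volume {r : ℝ | rotatedPoint θ (s, r) ∈ S} := by
  have hT : MeasurableSet (rotatedPoint θ ⁻¹' S) := (continuous_rotatedPoint θ).measurable hS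
  have h := (measurePreserving_height_along θ).measure_preimage hT.nullMeasurableSet
  rw [Measure.volume_eq_prod, Measure.prod_apply hT] at h
  rw [← preimage_comp] at h
  have e : rotatedPoint θ ∘ (fun x : Plane => (height θ x, along θ x)) = id :=
    funext fun x => rotatedPoint_height_along θ x
  rw [e, preimage_id] at h
  exact h

lemma innerParallel_eq_iInter (X : Set Plane) (l : ℝ) :
    innerParallel X l = ⋂ b ∈ closedBall (0 : Plane) l, (fun x => x + b) ⁻¹' X := by
  ext x
  simp only [innerParallel, mem_ofPred_eq, mem_iInter, mem_preimage]
  constructor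
  · intro h b hb
    exact h (by simpa [dist_eq_norm] using hb)
  · intro h y hy
    have := h (y - x) (by simpa [dist_eq_norm] using hy)
    rwa [add_sub_cancel] at this

lemma Convex.innerParallel {X : Set Plane} (hX : Convex ℝ X) (l : ℝ) :
    Convex ℝ (innerParallel X l) := by
  rw [innerParallel_eq_iInter]
  exact convex_iInter₂ fun b _ => hX.translate_preimage_left b

lemma IsCompact.innerParallel {X : Set Plane} (hX : IsCompact X) {l : ℝ} (hl : 0 ≤ l) :
    IsCompact (innerParallel X l) := by
  refine hX.of_isClosed_subset ?_ fun x hx => hx (mem_closedBall_self hl)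
  rw [innerParallel_eq_iInter]
  exact isClosed_biInter fun b _ => hX.isClosed.preimage (by fun_prop)

lemma exterParallel_innerParallel_subset (X : Set Plane) (l : ℝ) :
    exterParallel (innerParallel X l) l ⊆ X := by
  rintro _ ⟨x, hx, b, hb, rfl⟩
  exact hx (by simpa [dist_eq_norm] using hb)

/-- The needles in a fixed direction which leave a convex set originate from a set whose area is
at least the length of the needle times the width of the interior parallel. -/
lemma mul_volume_height_innerParallel_le {X : Set Plane} (hc : IsCompact X) (hv : Convex ℝ X)
    {l : ℝ} (hl : 0 < l) (θ : ℝ) :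
    ENNReal.ofReal l * volume (height θ '' innerParallel X l)
      ≤ volume (X \ {x | x + l • needleDir θ ∈ X}) := by
  have hG : MeasurableSet {x : Plane | x + l • needleDir θ ∈ X} :=
    hc.isClosed.measurableSet.preimage (by fun_prop)
  have hm : MeasurableSet (height θ '' innerParallel X l) :=
    ((hc.innerParallel hl.le).image (continuous_height θ)).isClosed.measurableSet
  rw [volume_eq_lintegral_rotatedPoint θ (hc.isClosed.measurableSet.diff hG),
    ← lintegral_indicator_const hm]
  refine lintegral_mono fun s => ?_
  by_cases hs : s ∈ height θ '' innerParallel X l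
  · rw [indicator_of_mem hs]
    obtain ⟨x, hx, rfl⟩ := hs
    have hcont : Continuous fun r : ℝ => rotatedPoint θ (height θ x, r) := by fun_prop
    have hseg : ∀ c, |c| ≤ l → rotatedPoint θ (height θ x, along θ x + c) ∈ X := by
      intro c hcl
      rw [rotatedPoint_add, rotatedPoint_height_along]
      exact hx (by simpa [dist_eq_norm, norm_smul, norm_needleDir] using hcl)
    set R : Set ℝ := {r | rotatedPoint θ (height θ x, r) ∈ X} with hR
    have hRcl : IsClosed R := hc.isClosed.preimage hcont
    obtain ⟨ρ, hρ⟩ := hc.isBounded.subset_closedBall (0 : Plane)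
    have hRb : BddAbove R := by
      refine ⟨along θ x + (ρ + ‖x‖), fun r hr => ?_⟩
      have h1 : rotatedPoint θ (height θ x, r) = x + (r - along θ x) • needleDir θ := by
        conv_rhs => enter [1]; rw [← rotatedPoint_height_along θ x]
        rw [← rotatedPoint_add, add_sub_cancel]
      have h2 := hρ hr
      rw [h1, mem_closedBall, dist_zero_right] at h2
      have h3 : ‖(r - along θ x) • needleDir θ‖ ≤ ρ + ‖x‖ := by
        calc _ = ‖(x + (r - along θ x) • needleDir θ) - x‖ := by rw [add_sub_cancel_left]
          _ ≤ _ := (norm_sub_le _ _).trans (by linarith)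
      rw [norm_smul, norm_needleDir, mul_one, Real.norm_eq_abs] at h3
      linarith [le_abs_self (r - along θ x)]
    have hRne : R.Nonempty := ⟨along θ x + 0, hseg 0 (by simpa using hl.le)⟩
    have hb : sSup R ∈ R := hRcl.csSup_mem hRne hRb
    have hge : along θ x + l ≤ sSup R := le_csSup hRb (hseg l (abs_of_pos hl).le)
    have hoc : R.OrdConnected := by
      have : Convex ℝ R := by
        intro a ha b hb' p q hp hq hpq
        have := hv ha hb' hp hq hpq
        have e : rotatedPoint θ (height θ x, p • a + q • b)
            = p • rotatedPoint θ (height θ x, a) + q • rotatedPoint θ (height θ x, b) := by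
          have hq' : q = 1 - p := by linarith
          subst hq'
          ext i
          fin_cases i <;> simp [rotatedPoint] <;> ring
        rw [hR, mem_ofPred_eq, e]
        exact this
      exact this.ordConnected
    calc ENNReal.ofReal l = volume (Ioc (sSup R - l) (sSup R)) := by
          rw [Real.volume_Ioc]; congr 1; ring
      _ ≤ _ := by
          refine measure_mono fun r hr => ⟨?_, fun hmem => ?_⟩
          · refine hoc.out (hseg 0 (by simpa using hl.le)) hb ⟨?_, hr.2⟩
            linarith [hr.1]
          · have hmem' : rotatedPoint θ (height θ x, r) + l • needleDir θ ∈ X := hmem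
            rw [← rotatedPoint_add] at hmem'
            have := le_csSup hRb (show r + l ∈ R from hmem')
            linarith [hr.1]
  · rw [indicator_of_notMem hs]
    exact zero_le

lemma volume_height_exterParallel_le {K : Set Plane} (hc : IsCompact K) (hv : Convex ℝ K)
    (hne : K.Nonempty) {l : ℝ} (hl : 0 ≤ l) (θ : ℝ) :
    volume (height θ '' exterParallel K l)
      ≤ volume (height θ '' K) + ENNReal.ofReal (2 * l) := by
  have hcomp : IsCompact (height θ '' K) := hc.image (continuous_height θ)
  obtain ⟨m, hm, hmin⟩ := hcomp.exists_isLeast (hne.image _)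
  obtain ⟨M, hM, hmax⟩ := hcomp.exists_isGreatest (hne.image _)
  have hoc : (height θ '' K).OrdConnected :=
    (hv.isPreconnected.image _ (continuous_height θ).continuousOn).ordConnected
  have h1 : height θ '' exterParallel K l ⊆ Icc (m - l) (M + l) := by
    rintro _ ⟨_, ⟨x, hx, b, hb, rfl⟩, rfl⟩
    have hx1 := hmin (mem_image_of_mem _ hx)
    have hx2 := hmax (mem_image_of_mem _ hx)
    have hb' : |height θ b| ≤ l := (abs_height_le θ b).trans (by simpa using hb)
    rw [abs_le] at hb'
    simp only [height_add]
    constructor <;> linarith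
  calc _ ≤ volume (Icc (m - l) (M + l)) := measure_mono h1
    _ = ENNReal.ofReal (M - m) + ENNReal.ofReal (2 * l) := by
        rw [Real.volume_Icc, ← ENNReal.ofReal_add (sub_nonneg.2 (hmin hM)) (by positivity)]
        congr 1; ring
    _ ≤ _ := by
        gcongr
        rw [← Real.volume_Icc]
        exact measure_mono (hoc.out hm hM)

lemma two_mul_hausdorffMeasure_frontier_exterParallel_le {K : Set Plane} (hc : IsCompact K)
    (hv : Convex ℝ K) {l : ℝ} (hl : 0 < l) :
    2 * μH[1] (frontier (exterParallel K l)) ≤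
      (∫⁻ θ in Ico 0 (2 * π), volume (height θ '' K))
        + ENNReal.ofReal (2 * l) * ENNReal.ofReal (2 * π) := by
  rcases K.eq_empty_or_nonempty with rfl | hne
  · simp [exterParallel]
  refine (two_mul_hausdorffMeasure_frontier_le (hc.add (isCompact_closedBall _ _))
    (hv.add (convex_closedBall _ _))
    (interior_exterParallel_nonempty hne hl)).trans ?_
  refine (lintegral_mono fun θ => volume_height_exterParallel_le hc hv hne hl.le θ).trans ?_
  rw [lintegral_add_right _ measurable_const, setLIntegral_const, Real.volume_Ico, sub_zero]

/-- The total measure of needles staying inside a convex set, in terms of the width of the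
interior parallel. -/
lemma lintegral_needleAngles_add_le {X : Set Plane} (hc : IsCompact X) (hv : Convex ℝ X)
    {l : ℝ} (hl : 0 < l) :
    (∫⁻ x in X, volume (needleAngles X l x))
        + ENNReal.ofReal l * ∫⁻ θ in Ico 0 (2 * π), volume (height θ '' innerParallel X l)
      ≤ volume X * ENNReal.ofReal (2 * π) := by
  have hG := measurableSet_needle hc.isClosed l
  have e1 : ∀ x, volume (needleAngles X l x) = volume.restrict (Ico 0 (2 * π))
      (Prod.mk x ⁻¹' {p : Plane × ℝ | p.1 + l • needleDir p.2 ∈ X}) := fun x => by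
    rw [Measure.restrict_apply (measurable_prodMk_left hG), inter_comm]
    rfl
  simp_rw [e1]
  rw [← Measure.prod_apply hG, Measure.prod_apply_symm hG,
    ← lintegral_const_mul' _ _ ENNReal.ofReal_ne_top]
  refine (le_lintegral_add _ _).trans ?_
  calc _ ≤ ∫⁻ _ in Ico 0 (2 * π), volume X := by
        refine lintegral_mono fun θ => ?_
        have hm : MeasurableSet {x : Plane | x + l • needleDir θ ∈ X} :=
          hc.isClosed.measurableSet.preimage (by fun_prop)
        simp only
        rw [Measure.restrict_apply (measurable_prodMk_right hG), inter_comm,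
          ← measure_inter_add_sdiff X hm]
        exact add_le_add le_rfl (mul_volume_height_innerParallel_le hc hv hl θ)
    _ = _ := by rw [setLIntegral_const, Real.volume_Ico, sub_zero]

/-- upper bound on the Buffon probability of a compact convex set of
perimeter `2π` with nonempty interior. -/
theorem buffonProb_le (X : Set Plane) (hXc : IsCompact X) (hXconv : Convex ℝ X)
    (hint : (interior X).Nonempty) (hper : μH[1] (frontier X) = ENNReal.ofReal (2 * π))
    (l : ℝ) (hl : 0 < l) :
    buffonProb X l ≤
      ((volume X).toReal + π * l ^ 2 - 2 * l +
          l * (2 * π - (μH[1] (frontier (exterParallel (innerParallel X l) l))).toReal)) /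
        (volume X).toReal := by
  have hπ : 3 < π := Real.pi_gt_three
  have hv0 : volume X ≠ 0 :=
    ((isOpen_interior.measure_pos volume hint).trans_le (measure_mono interior_subset)).ne'
  have hvt : volume X ≠ ⊤ := hXc.measure_lt_top.ne
  have hv : 0 < (volume X).toReal := ENNReal.toReal_pos hv0 hvt
  have hKc := hXc.innerParallel hl.le
  have hKv := hXconv.innerParallel l
  have hmono : μH[1] (frontier (exterParallel (innerParallel X l) l))
      ≤ ENNReal.ofReal (2 * π) := by
    rcases (innerParallel X l).eq_empty_or_nonempty with h | h
    · simp [h, exterParallel]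
    · rw [← hper]
      exact hausdorffMeasure_frontier_mono hXc (exterParallel_innerParallel_subset X l)
        (hKv.add (convex_closedBall _ _)) (hKc.add (isCompact_closedBall _ _)).isClosed
        (interior_exterParallel_nonempty h hl)
  have hwidth := two_mul_hausdorffMeasure_frontier_exterParallel_le hKc hKv hl
  have hloss := lintegral_needleAngles_add_le hXc hXconv hl
  have hint_eq : ∫ x in X, (volume (needleAngles X l x)).toReal
      = (∫⁻ x in X, volume (needleAngles X l x)).toReal := by
    refine integral_toReal (Measurable.aemeasurable ?_) (Filter.Eventually.of_forall fun x => ?_)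
    · have e : ∀ x, volume (needleAngles X l x) = volume.restrict (Ico 0 (2 * π))
          (Prod.mk x ⁻¹' {p : Plane × ℝ | p.1 + l • needleDir p.2 ∈ X}) := fun x => by
        rw [Measure.restrict_apply (measurable_prodMk_left (measurableSet_needle hXc.isClosed l)),
          inter_comm]
        rfl
      simp_rw [e]
      exact measurable_measure_prodMk_left (measurableSet_needle hXc.isClosed l)
    · exact (measure_mono (fun θ hθ => hθ.1)).trans_lt
        (measure_Ico_lt_top (a := (0 : ℝ)) (b := 2 * π))
  set J := ∫⁻ x in X, volume (needleAngles X l x)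
  set W := ∫⁻ θ in Ico 0 (2 * π), volume (height θ '' innerParallel X l)
  set L := μH[1] (frontier (exterParallel (innerParallel X l) l))
  have htop : volume X * ENNReal.ofReal (2 * π) ≠ ⊤ := ENNReal.mul_ne_top hvt ENNReal.ofReal_ne_top
  have hJ : J ≠ ⊤ := ne_top_of_le_ne_top htop (le_self_add.trans hloss)
  have hlW : ENNReal.ofReal l * W ≠ ⊤ := ne_top_of_le_ne_top htop (le_add_self.trans hloss)
  have hW : W ≠ ⊤ := fun h => hlW (by rw [h, ENNReal.mul_top (by simpa using hl)])
  have h2π : 0 ≤ 2 * π := by positivity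
  have r1 : L.toReal ≤ 2 * π := ENNReal.toReal_le_of_le_ofReal h2π hmono
  have r2 : 2 * L.toReal ≤ W.toReal + 2 * l * (2 * π) := by
    have hs : ENNReal.ofReal (2 * l) * ENNReal.ofReal (2 * π) ≠ ⊤ :=
      ENNReal.mul_ne_top ENNReal.ofReal_ne_top ENNReal.ofReal_ne_top
    have := ENNReal.toReal_mono (ENNReal.add_ne_top.2 ⟨hW, hs⟩) hwidth
    rwa [ENNReal.toReal_add hW hs, ENNReal.toReal_mul, ENNReal.toReal_mul,
      ENNReal.toReal_ofReal (by positivity), ENNReal.toReal_ofReal h2π,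
      ENNReal.toReal_ofNat] at this
  have r3 : J.toReal + l * W.toReal ≤ (volume X).toReal * (2 * π) := by
    have := ENNReal.toReal_mono htop hloss
    rwa [ENNReal.toReal_add hJ hlW, ENNReal.toReal_mul, ENNReal.toReal_mul,
      ENNReal.toReal_ofReal hl.le, ENNReal.toReal_ofReal h2π] at this
  rw [buffonProb, if_neg hv0, hint_eq, one_div_mul_eq_div, ← div_div]
  gcongr
  rw [div_le_iff₀ (by positivity)]
  have r4 : l * (2 * L.toReal) ≤ l * (W.toReal + 2 * l * (2 * π)) := by gcongr
  have r5 : 0 ≤ l * ((π - 1) * (2 * π - L.toReal)) :=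
    mul_nonneg hl.le (mul_nonneg (by linarith) (by linarith))
  have r6 : 0 ≤ l ^ 2 * (π * (π - 2)) := by
    have : 0 ≤ π - 2 := by linarith
    positivity
  linarith
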